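/- arXiv:2211.11835 — 3 statements merged into one kernel-verified Lean document; each statement's English description precedes it below -/
import Mathlib

section
/- The fair threshold θ_f = μ₋ + (μ₊−μ₋)/(K+1) equalizes the two group error rates: ∫_{−∞}^{θ_f} φ₊(x) dx = ∫_{θ_f}^{+∞} φ₋(x) dx. Moreover θ_f is the unique θ ∈ [μ₋, μ₊] with this property. -/
/-!
Standardizing both Gaussians expresses the two group errors through the standard normal tail
`G t = ∫ y in Ioi t, phiM 0 y`: the error of the `μm` group at threshold `θ` is `G (θ - μm)`
(`integral_Ioi_phiM`), and the error of the `μp` group is `G ((μp - θ) / K)`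
(`integral_Iic_phiP`). Since the density is positive, `G` is strictly decreasing, hence injective
(`tail_strictAnti`), so the errors agree exactly when `(μp - θ) / K = θ - μm`. This linear equation
has the single solution `θ = μm + (μp - μm) / (K + 1)`.
-/

open Real MeasureTheory Set

/-- Density of the Gaussian N(μm, 1). -/
noncomputable def phiM (μm x : ℝ) : ℝ :=
  (1 / Real.sqrt (2 * Real.pi)) * Real.exp (-(x - μm) ^ 2 / 2)

/-- Density of the Gaussian N(μp, K²). -/
noncomputable def phiP (μp K x : ℝ) : ℝ :=
  (1 / (Real.sqrt (2 * Real.pi) * K)) * Real.exp (-(x - μp) ^ 2 / (2 * K ^ 2))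

lemma phiM_pos (m x : ℝ) : 0 < phiM m x := by
  unfold phiM
  positivity

lemma integrable_phiM_zero : Integrable (phiM 0) := by
  have h := (integrable_exp_neg_mul_sq (b := 1 / 2) (by norm_num)).const_mul
    (1 / Real.sqrt (2 * Real.pi))
  refine h.congr (Filter.Eventually.of_forall fun x => ?_)
  simp only [phiM]
  ring_nf

lemma integral_Ioi_phiM (m θ : ℝ) :
    ∫ x in Ioi θ, phiM m x = ∫ y in Ioi (θ - m), phiM 0 y := by
  have h := (measurePreserving_sub_right volume m).setIntegral_preimage_emb
    (measurableEmbedding_subRight m) (phiM 0) (Ioi (θ - m))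
  rw [← h]
  simp [phiM]

/-- Reflecting `x ↦ -x` and rescaling by `K` turns the lower tail of `N(μp, K²)` into an upper tail
of a unit-variance Gaussian centred at `-μp / K`, which is then recentred at `0`. -/
lemma integral_Iic_phiP {K : ℝ} (hK : 0 < K) (μp θ : ℝ) :
    ∫ x in Iic θ, phiP μp K x = ∫ y in Ioi ((μp - θ) / K), phiM 0 y := by
  have hpt : ∀ x, phiP μp K x = K⁻¹ * phiM (-(μp / K)) (K⁻¹ * -x) := fun x => by
    have hexp : -(x - μp) ^ 2 / (2 * K ^ 2) = -(K⁻¹ * -x - -(μp / K)) ^ 2 / 2 := by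
      field_simp
      ring
    rw [phiP, phiM, hexp]
    field_simp
  simp_rw [hpt]
  rw [integral_comp_neg_Iic θ fun x => K⁻¹ * phiM (-(μp / K)) (K⁻¹ * x), integral_const_mul,
    integral_comp_mul_left_Ioi _ _ (inv_pos.mpr hK), integral_Ioi_phiM, smul_eq_mul, inv_inv,
    inv_mul_cancel_left₀ hK.ne']
  congr 3
  field_simp
  ring

lemma tail_strictAnti : StrictAnti fun t : ℝ => ∫ y in Ioi t, phiM 0 y := by
  intro a b hab
  have h := intervalIntegral.integral_Ioi_sub_Ioi (a := a) (b := b)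
    integrable_phiM_zero.integrableOn hab.le
  have hpos : 0 < ∫ y in a..b, phiM 0 y :=
    intervalIntegral.intervalIntegral_pos_of_pos integrable_phiM_zero.intervalIntegrable
      (phiM_pos 0) hab
  simp only
  linarith

theorem fair_threshold_equalizes_group_errors (μm μp K : ℝ) (hμ : μm < μp) (hK : 1 < K) :
    (∫ x in Iic (μm + (μp - μm) / (K + 1)), phiP μp K x)
      = (∫ x in Ioi (μm + (μp - μm) / (K + 1)), phiM μm x) ∧
    ∀ θ ∈ Icc μm μp,
      (∫ x in Iic θ, phiP μp K x) = (∫ x in Ioi θ, phiM μm x) →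
      θ = μm + (μp - μm) / (K + 1) := by
  have hK0 : 0 < K := by linarith
  have hK1 : K + 1 ≠ 0 := by linarith
  refine ⟨?_, fun θ _ h => ?_⟩
  · rw [integral_Iic_phiP hK0, integral_Ioi_phiM μm]
    congr 3
    field_simp
    ring
  · rw [integral_Iic_phiP hK0, integral_Ioi_phiM μm] at h
    have h' : (μp - θ) / K = θ - μm := tail_strictAnti.injective h
    rw [div_eq_iff hK0.ne'] at h'
    field_simp
    linarith
end

section
/- Suppose 0 ≤ ε ≤ (μ₊−μ₋)/2, ln K ≤ (μ₊−μ₋−2ε)²/2, and (K+1)·ε ≤ μ₊−μ₋. Then θ_r(ε) = μ₋ − (μ₊−μ₋−(K²+1)ε)/(K²−1) + (K/(K²−1))·√(2(K²−1)·ln K + (μ₊−μ₋−2ε)²) lies in [μ₋, μ₊−ε], the map θ ↦ E_rob(θ,ε) is strictly decreasing on [μ₋, θ_r(ε)] and strictly increasing on [θ_r(ε), μ₊], and hence θ_r(ε) minimizes E_rob(·,ε) over [μ₋, μ₊]. -/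
/-!
The derivative of `θ ↦ Erob μm μp K θ ε` is `(φ₊(θ + ε) - φ₋(θ - ε)) / 2`. Comparing logarithms, it has
the sign of the quadratic
`q(θ) = K² (θ - ε - μm)² - (θ + ε - μp)² - 2 K² log K` (`phiP_lt_phiM`, `phiM_lt_phiP`), which has
leading coefficient `K² - 1 > 0` and larger root `θrob` (`robQuad_factor`).

The hypothesis `(K + 1) ε ≤ μp - μm` gives `q(μm) ≤ 0`, so `μm` lies between the two roots, and the
hypothesis on `log K` gives `q(μp - ε) ≥ 0`, so `μp - ε` lies to the right of `θrob`. Hence `q < 0`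
strictly between `μm` and `θrob`, and `q > 0` to the right of `θrob`; everything follows.
-/

open Real MeasureTheory Set

/-- Robust error of the threshold classifier at θ under ε-perturbations. -/
noncomputable def Erob (μm μp K θ ε : ℝ) : ℝ :=
  (1 / 2) * (∫ x in Iic (θ + ε), phiP μp K x) + (1 / 2) * (∫ x in Ioi (θ - ε), phiM μm x)

/-- Threshold of the optimal ε-robust classifier. -/
noncomputable def θrob (μm μp K ε : ℝ) : ℝ :=
  μm - (μp - μm - (K ^ 2 + 1) * ε) / (K ^ 2 - 1) +
    (K / (K ^ 2 - 1)) * Real.sqrt (2 * (K ^ 2 - 1) * Real.log K + (μp - μm - 2 * ε) ^ 2)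

/-- The quadratic in `θ` with the sign of `φ₊(θ + ε) - φ₋(θ - ε)`: it is `2 K²` times the logarithm
of the likelihood ratio. -/
noncomputable def robQuad (μm μp K ε θ : ℝ) : ℝ :=
  K ^ 2 * (θ - ε - μm) ^ 2 - (θ + ε - μp) ^ 2 - 2 * K ^ 2 * Real.log K

/-- The smaller root of `robQuad`, the conjugate of `θrob`. -/
noncomputable def θconj (μm μp K ε : ℝ) : ℝ :=
  μm - (μp - μm - (K ^ 2 + 1) * ε) / (K ^ 2 - 1) -
    (K / (K ^ 2 - 1)) * Real.sqrt (2 * (K ^ 2 - 1) * Real.log K + (μp - μm - 2 * ε) ^ 2)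

lemma robQuad_factor (μm μp K ε θ : ℝ) (hK : 1 < K) :
    robQuad μm μp K ε θ =
      (K ^ 2 - 1) * ((θ - θconj μm μp K ε) * (θ - θrob μm μp K ε)) := by
  have hK2 : 0 < K ^ 2 - 1 := by nlinarith
  have hlog := Real.log_pos hK
  have hsq : Real.sqrt (2 * (K ^ 2 - 1) * Real.log K + (μp - μm - 2 * ε) ^ 2) ^ 2 =
      2 * (K ^ 2 - 1) * Real.log K + (μp - μm - 2 * ε) ^ 2 := Real.sq_sqrt (by positivity)
  unfold robQuad θconj θrob
  generalize Real.sqrt (2 * (K ^ 2 - 1) * Real.log K + (μp - μm - 2 * ε) ^ 2) = s at hsq ⊢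
  have hne := hK2.ne'
  field_simp
  linear_combination K ^ 2 * hsq

lemma phiP_eq (μp K x : ℝ) (hK : 1 < K) :
    phiP μp K x = (1 / Real.sqrt (2 * Real.pi)) *
      Real.exp (-Real.log K - (x - μp) ^ 2 / (2 * K ^ 2)) := by
  have hK0 : 0 < K := by linarith
  have hpi : 0 < Real.sqrt (2 * Real.pi) := by positivity
  rw [phiP, Real.exp_sub, Real.exp_neg, Real.exp_log hK0, neg_div, Real.exp_neg]
  field_simp

lemma robQuad_exponent (μm μp K ε θ : ℝ) (hK : 1 < K) :
    (-Real.log K - (θ + ε - μp) ^ 2 / (2 * K ^ 2)) - (-(θ - ε - μm) ^ 2 / 2) =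
      robQuad μm μp K ε θ / (2 * K ^ 2) := by
  have hK0 : K ≠ 0 := by linarith
  unfold robQuad
  field_simp
  ring

lemma phiP_lt_phiM (μm μp K ε θ : ℝ) (hK : 1 < K) (h : robQuad μm μp K ε θ < 0) :
    phiP μp K (θ + ε) < phiM μm (θ - ε) := by
  rw [phiP_eq _ _ _ hK, phiM]
  have := div_neg_of_neg_of_pos h (show 0 < 2 * K ^ 2 by positivity)
  have := robQuad_exponent μm μp K ε θ hK
  have hpi : 0 < 1 / Real.sqrt (2 * Real.pi) := by positivity
  exact mul_lt_mul_of_pos_left (Real.exp_lt_exp.2 (by linarith)) hpi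

lemma phiM_lt_phiP (μm μp K ε θ : ℝ) (hK : 1 < K) (h : 0 < robQuad μm μp K ε θ) :
    phiM μm (θ - ε) < phiP μp K (θ + ε) := by
  rw [phiP_eq _ _ _ hK, phiM]
  have := div_pos h (show 0 < 2 * K ^ 2 by positivity)
  have := robQuad_exponent μm μp K ε θ hK
  have hpi : 0 < 1 / Real.sqrt (2 * Real.pi) := by positivity
  exact mul_lt_mul_of_pos_left (Real.exp_lt_exp.2 (by linarith)) hpi

lemma hasDerivAt_integral_Iic {f : ℝ → ℝ} (hc : Continuous f) (hi : Integrable f) (t : ℝ) :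
    HasDerivAt (fun t => ∫ x in Iic t, f x) (f t) t := by
  have h : (fun t => ∫ x in Iic t, f x) = fun t => (∫ x in Iic 0, f x) + ∫ x in (0 : ℝ)..t, f x := by
    funext t
    rw [← intervalIntegral.integral_Iic_sub_Iic hi.integrableOn hi.integrableOn]
    ring
  rw [h]
  exact (intervalIntegral.integral_hasDerivAt_right (hc.intervalIntegrable _ _)
    (hc.stronglyMeasurableAtFilter _ _) hc.continuousAt).const_add _

lemma hasDerivAt_integral_Ioi {f : ℝ → ℝ} (hc : Continuous f) (hi : Integrable f) (t : ℝ) :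
    HasDerivAt (fun t => ∫ x in Ioi t, f x) (-f t) t := by
  have h : (fun t => ∫ x in Ioi t, f x) = fun t => (∫ x, f x) - ∫ x in Iic t, f x := by
    funext t
    rw [← intervalIntegral.integral_Iic_add_Ioi (b := t) hi.integrableOn hi.integrableOn]
    ring
  rw [h]
  exact (hasDerivAt_integral_Iic hc hi t).const_sub _

lemma continuous_phiM (μm : ℝ) : Continuous (phiM μm) := by
  unfold phiM; fun_prop

lemma continuous_phiP (μp K : ℝ) : Continuous (phiP μp K) := by
  unfold phiP; fun_prop

lemma integrable_phiM (μm : ℝ) : Integrable (phiM μm) := by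
  have h := (((integrable_exp_neg_mul_sq (b := 1 / 2) (by norm_num)).comp_sub_right μm).const_mul
    (1 / Real.sqrt (2 * Real.pi)))
  refine h.congr (Filter.Eventually.of_forall fun x => ?_)
  simp only [phiM]
  congr 2
  ring

lemma integrable_phiP (μp K : ℝ) (hK : 1 < K) : Integrable (phiP μp K) := by
  have h := (((integrable_exp_neg_mul_sq (b := 1 / (2 * K ^ 2))
    (by positivity)).comp_sub_right μp).const_mul (1 / (Real.sqrt (2 * Real.pi) * K)))
  refine h.congr (Filter.Eventually.of_forall fun x => ?_)
  simp only [phiP]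
  congr 2
  ring

lemma hasDerivAt_Erob (μm μp K ε θ : ℝ) (hK : 1 < K) :
    HasDerivAt (fun θ => Erob μm μp K θ ε)
      ((1 / 2) * phiP μp K (θ + ε) + (1 / 2) * -phiM μm (θ - ε)) θ := by
  have hP := (hasDerivAt_integral_Iic (continuous_phiP μp K) (integrable_phiP μp K hK)
    (θ + ε)).comp_add_const θ ε
  have hM := (hasDerivAt_integral_Ioi (continuous_phiM μm) (integrable_phiM μm)
    (θ - ε)).comp_sub_const θ ε
  exact (hP.const_mul (1 / 2)).add (hM.const_mul (1 / 2))

theorem robust_threshold_minimizes_robust_error (μm μp K ε : ℝ) (hμ : μm < μp) (hK : 1 < K)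
    (hε0 : 0 ≤ ε) (hε1 : ε ≤ (μp - μm) / 2)
    (hlogK : Real.log K ≤ (μp - μm - 2 * ε) ^ 2 / 2)
    (hKε : (K + 1) * ε ≤ μp - μm) :
    θrob μm μp K ε ∈ Icc μm (μp - ε) ∧
    StrictAntiOn (fun θ => Erob μm μp K θ ε) (Icc μm (θrob μm μp K ε)) ∧
    StrictMonoOn (fun θ => Erob μm μp K θ ε) (Icc (θrob μm μp K ε) μp) ∧
    ∀ θ ∈ Icc μm μp, Erob μm μp K (θrob μm μp K ε) ε ≤ Erob μm μp K θ ε := by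
  have hK2 : 0 < K ^ 2 - 1 := by nlinarith
  have hlog := Real.log_pos hK
  have hfac := fun θ => robQuad_factor μm μp K ε θ hK
  have hle : θconj μm μp K ε ≤ θrob μm μp K ε := by
    have : 0 ≤ (K / (K ^ 2 - 1)) *
        Real.sqrt (2 * (K ^ 2 - 1) * Real.log K + (μp - μm - 2 * ε) ^ 2) := by positivity
    unfold θconj θrob
    linarith
  have hq0 : robQuad μm μp K ε μm ≤ 0 := by
    have h1 : (K * ε) ^ 2 ≤ (μp - μm - ε) ^ 2 :=
      pow_le_pow_left₀ (by positivity) (by linarith) 2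
    have h2 : 0 ≤ 2 * K ^ 2 * Real.log K := by positivity
    unfold robQuad
    nlinarith
  have hq1 : 0 ≤ robQuad μm μp K ε (μp - ε) := by
    have : 0 ≤ 2 * K ^ 2 * ((μp - μm - 2 * ε) ^ 2 / 2 - Real.log K) :=
      mul_nonneg (by positivity) (by linarith)
    unfold robQuad
    nlinarith
  generalize θconj μm μp K ε = a at *
  generalize θrob μm μp K ε = b at *
  rw [hfac] at hq0 hq1
  have hq0 := nonpos_of_mul_nonpos_right hq0 hK2
  have hq1 := nonneg_of_mul_nonneg_right hq1 hK2
  have ha : a ≤ μm := by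
    by_contra! h
    nlinarith [mul_pos (sub_pos.2 h) (sub_pos.2 (h.trans_le hle))]
  have hb : μm ≤ b := by
    by_contra! h
    nlinarith [mul_pos (sub_pos.2 h) (sub_pos.2 (hle.trans_lt h))]
  have hb' : b ≤ μp - ε := by
    by_contra! h
    have : a < μp - ε := by linarith
    nlinarith [mul_pos (sub_pos.2 h) (sub_pos.2 this)]
  have hd := fun θ => hasDerivAt_Erob μm μp K ε θ hK
  have hcont : Continuous fun θ => Erob μm μp K θ ε :=
    continuous_iff_continuousAt.2 fun θ => (hd θ).continuousAt
  have hanti : StrictAntiOn (fun θ => Erob μm μp K θ ε) (Icc μm b) := by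
    refine strictAntiOn_of_deriv_neg (convex_Icc _ _) hcont.continuousOn fun θ hθ => ?_
    rw [interior_Icc] at hθ
    have := phiP_lt_phiM μm μp K ε θ hK (by
      rw [hfac]
      exact mul_neg_of_pos_of_neg hK2
        (mul_neg_of_pos_of_neg (by linarith [hθ.1]) (by linarith [hθ.2])))
    rw [(hd θ).deriv]
    linarith
  have hmono : StrictMonoOn (fun θ => Erob μm μp K θ ε) (Icc b μp) := by
    refine strictMonoOn_of_deriv_pos (convex_Icc _ _) hcont.continuousOn fun θ hθ => ?_
    rw [interior_Icc] at hθ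
    have := phiM_lt_phiP μm μp K ε θ hK (by
      rw [hfac]
      exact mul_pos hK2 (mul_pos (by linarith [hθ.1]) (by linarith [hθ.1])))
    rw [(hd θ).deriv]
    linarith
  refine ⟨⟨hb, hb'⟩, hanti, hmono, fun θ hθ => ?_⟩
  rcases le_total θ b with h | h
  · exact hanti.antitoneOn ⟨hθ.1, h⟩ ⟨hb, le_rfl⟩ h
  · exact hmono.monotoneOn ⟨le_rfl, by linarith⟩ ⟨h, hθ.2⟩ h
end

section
/- (Theorem 6.5, monotonicity) Suppose 1 < K < exp((μ₊−μ₋)²/2). Define θ_f(λ) = μ₋ − (μ₊−μ₋)/(K²−1) + (K/(K²−1))·√(2(K²−1)·ln(((1−λ)/(1+λ))·K) + (μ₊−μ₋)²) for 0 ≤ λ ≤ (K−1)/(K+1), and θ_f(λ) = μ₋ + (μ₊−μ₋)/(K+1) for λ > (K−1)/(K+1). Then both λ ↦ θ_f(λ) and λ ↦ D(θ_f(λ)) are monotonically nonincreasing (antitone) on [0, +∞), where D(θ) = (1/2)·∫_ℝ |x−θ|·φ₊(x) dx + (1/2)·∫_ℝ |x−θ|·φ₋(x) dx is the average distance to the decision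 boundary. -/
/-!
Put `c = (μp - μm) / (K + 1)` and `θ* = μm + c`, the threshold at which both classes have the same
standardized distance `c` to the boundary.

* The square-root branch of the threshold decreases in `lam`, because `(1 - lam) / (1 + lam)` does,
  and it reaches `θ*` exactly at `lam = (K - 1) / (K + 1)`. So the threshold is antitone with values
  in `[θ*, ∞)`.
* Substituting `x = μp + K z` in the first integral and `x = μm - z` in the second gives
  `avgDist (θ* + t) = 1/2 ∫ (|K (z + c) - t| + |z + c + t|) φ(z) dz` with `φ` the standard normal
  density (`avgDist_eq`). For fixed `z` the integrand is nondecreasing in `t ≥ 0`: at every `t` at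
  least one of the two absolute values has slope `+1` (`abs_add_abs_mono`). Hence `avgDist` is
  monotone on `[θ*, ∞)`.

Composing the two gives the second claim.
-/

open Real MeasureTheory Set

/-- Average distance to the decision boundary of the threshold classifier at θ. -/
noncomputable def avgDist (μm μp K θ : ℝ) : ℝ :=
  (1 / 2) * (∫ x : ℝ, |x - θ| * phiP μp K x) + (1 / 2) * (∫ x : ℝ, |x - θ| * phiM μm x)

/-- Threshold of the classifier minimizing the λ-penalized fair objective. -/
noncomputable def θfairPen (μm μp K lam : ℝ) : ℝ :=
  if lam ≤ (K - 1) / (K + 1) then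
    μm - (μp - μm) / (K ^ 2 - 1) +
      (K / (K ^ 2 - 1)) *
        Real.sqrt (2 * (K ^ 2 - 1) * Real.log ((1 - lam) / (1 + lam) * K) + (μp - μm) ^ 2)
  else μm + (μp - μm) / (K + 1)

lemma abs_add_abs_mono {K w s t : ℝ} (hK : 0 < K) (hs : 0 ≤ s) (hst : s ≤ t) :
    |K * w - s| + |w + s| ≤ |K * w - t| + |w + t| := by
  rcases le_total 0 w with hw | hw
  · have h1 := abs_sub_abs_le_abs_sub (K * w - s) (K * w - t)
    rw [show K * w - s - (K * w - t) = t - s by ring, abs_of_nonneg (sub_nonneg.2 hst)] at h1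
    rw [abs_of_nonneg (add_nonneg hw hs), abs_of_nonneg (add_nonneg hw (hs.trans hst))]
    linarith
  · have h1 := abs_sub_abs_le_abs_sub (w + s) (w + t)
    rw [show w + s - (w + t) = -(t - s) by ring, abs_neg, abs_of_nonneg (sub_nonneg.2 hst)] at h1
    have hKw : K * w ≤ 0 := mul_nonpos_of_nonneg_of_nonpos hK.le hw
    rw [abs_of_nonpos (by linarith : K * w - s ≤ 0), abs_of_nonpos (by linarith : K * w - t ≤ 0)]
    linarith

lemma integrable_abs_affine_mul_phiM (a b : ℝ) :
    Integrable (fun z : ℝ => |a * z + b| * phiM 0 z) := by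
  have h1 : Integrable (fun z : ℝ => z * Real.exp (-(1 / 2) * z ^ 2)) :=
    integrable_mul_exp_neg_mul_sq (by norm_num)
  have h0 : Integrable (fun z : ℝ => Real.exp (-(1 / 2) * z ^ 2)) :=
    integrable_exp_neg_mul_sq (by norm_num)
  have h := (((h1.const_mul a).add (h0.const_mul b)).abs).const_mul (1 / Real.sqrt (2 * Real.pi))
  refine h.congr (Filter.Eventually.of_forall fun z => ?_)
  have e : a * (z * Real.exp (-(1 / 2) * z ^ 2)) + b * Real.exp (-(1 / 2) * z ^ 2)
      = (a * z + b) * Real.exp (-(1 / 2) * z ^ 2) := by ring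
  simp only [Pi.add_apply, phiM]
  rw [e, abs_mul, abs_of_pos (Real.exp_pos _),
    show -(z - 0) ^ 2 / 2 = -(1 / 2) * z ^ 2 by ring]
  ring

lemma integral_phiP_eq (μp θ : ℝ) {K : ℝ} (hK : 0 < K) :
    ∫ x : ℝ, |x - θ| * phiP μp K x = ∫ z : ℝ, |K * z + (μp - θ)| * phiM 0 z := by
  rw [← integral_add_right_eq_self (fun x : ℝ => |x - θ| * phiP μp K x) μp]
  have h := Measure.integral_comp_mul_left
    (fun x : ℝ => |x + μp - θ| * phiP μp K (x + μp)) K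
  have h2 : ∫ z : ℝ, |K * z + (μp - θ)| * phiM 0 z
      = K * ∫ z : ℝ, |K * z + μp - θ| * phiP μp K (K * z + μp) := by
    rw [← integral_const_mul]
    congr 1 with z
    unfold phiM phiP
    rw [show -(K * z + μp - μp) ^ 2 / (2 * K ^ 2) = -(z - 0) ^ 2 / 2 by field_simp; ring,
      show K * z + (μp - θ) = K * z + μp - θ by ring]
    field_simp
  rw [h2, h, abs_of_pos (inv_pos.2 hK), smul_eq_mul, mul_inv_cancel_left₀ hK.ne']

lemma integral_phiM_eq (μm θ : ℝ) :
    ∫ x : ℝ, |x - θ| * phiM μm x = ∫ z : ℝ, |1 * z + (θ - μm)| * phiM 0 z := by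
  rw [← integral_sub_left_eq_self (fun x : ℝ => |x - θ| * phiM μm x) volume μm]
  congr 1 with z
  unfold phiM
  rw [show μm - z - θ = -(1 * z + (θ - μm)) by ring, abs_neg,
    show -(μm - z - μm) ^ 2 / 2 = -(z - 0) ^ 2 / 2 by ring]

/-- The average distance as one integral against the standard normal density. -/
lemma avgDist_eq (μm μp θ : ℝ) {K : ℝ} (hK : 0 < K) :
    avgDist μm μp K θ =
      (1 / 2) * ∫ z : ℝ, (|K * z + (μp - θ)| * phiM 0 z + |1 * z + (θ - μm)| * phiM 0 z) := by
  rw [avgDist, integral_phiP_eq _ _ hK, integral_phiM_eq,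
    integral_add (integrable_abs_affine_mul_phiM _ _) (integrable_abs_affine_mul_phiM _ _)]
  ring

lemma avgDist_monotoneOn (μm μp : ℝ) {K : ℝ} (hK : 0 < K) :
    MonotoneOn (avgDist μm μp K) (Ici (μm + (μp - μm) / (K + 1))) := by
  intro θ₁ h₁ θ₂ _ h
  rw [avgDist_eq _ _ _ hK, avgDist_eq _ _ _ hK]
  refine mul_le_mul_of_nonneg_left (integral_mono
    ((integrable_abs_affine_mul_phiM _ _).add (integrable_abs_affine_mul_phiM _ _))
    ((integrable_abs_affine_mul_phiM _ _).add (integrable_abs_affine_mul_phiM _ _))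
    fun z => ?_) (by norm_num)
  have hφ : 0 ≤ phiM 0 z := by unfold phiM; positivity
  have hc : (μp - μm) = (K + 1) * ((μp - μm) / (K + 1)) := by field_simp
  simp only [mem_Ici] at h₁
  set c := (μp - μm) / (K + 1) with hcdef
  have key := abs_add_abs_mono (K := K) (w := z + c) (s := θ₁ - (μm + c)) (t := θ₂ - (μm + c))
    hK (by linarith) (by linarith)
  have e (θ : ℝ) : K * (z + c) - (θ - (μm + c)) = K * z + (μp - θ) := by
    linear_combination -hc
  have e' (θ : ℝ) : z + c + (θ - (μm + c)) = 1 * z + (θ - μm) := by ring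
  rw [e, e, e', e'] at key
  simp only [← add_mul]
  exact mul_le_mul_of_nonneg_right key hφ

/-- The square-root branch of the threshold. -/
noncomputable def sqrtBranch (μm μp K lam : ℝ) : ℝ :=
  μm - (μp - μm) / (K ^ 2 - 1) +
    (K / (K ^ 2 - 1)) *
      Real.sqrt (2 * (K ^ 2 - 1) * Real.log ((1 - lam) / (1 + lam) * K) + (μp - μm) ^ 2)

lemma sqrtBranch_antitoneOn (μm μp : ℝ) {K : ℝ} (hK : 1 < K) :
    AntitoneOn (sqrtBranch μm μp K) (Icc 0 ((K - 1) / (K + 1))) := by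
  intro a ha b hb hab
  have hK2 : 0 < K ^ 2 - 1 := by nlinarith
  have hb1 : b < 1 := hb.2.trans_lt (by rw [div_lt_one (by linarith)]; linarith)
  have ha0 := ha.1
  have hb0 := hb.1
  unfold sqrtBranch
  have hpos : 0 < (1 - b) / (1 + b) * K :=
    mul_pos (div_pos (by linarith) (by linarith)) (by linarith)
  gcongr
  linarith

lemma sqrtBranch_end {μm μp K : ℝ} (hμ : μm < μp) (hK : 1 < K) :
    sqrtBranch μm μp K ((K - 1) / (K + 1)) = μm + (μp - μm) / (K + 1) := by
  have hK1 : K + 1 ≠ 0 := by linarith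
  have hKm : K - 1 ≠ 0 := by linarith
  have hK0 : K ≠ 0 := by linarith
  have hK2 : K ^ 2 - 1 ≠ 0 := by nlinarith
  have h : (1 - (K - 1) / (K + 1)) / (1 + (K - 1) / (K + 1)) * K = 1 := by
    have : 1 + (K - 1) / (K + 1) = 2 * K / (K + 1) := by field_simp; ring
    rw [this]
    field_simp
    ring
  unfold sqrtBranch
  rw [h, Real.log_one, mul_zero, zero_add, Real.sqrt_sq (by linarith)]
  rw [show K ^ 2 - 1 = (K - 1) * (K + 1) by ring]
  field_simp
  ring

lemma θfairPen_eq_sqrtBranch_min {μm μp K lam : ℝ} (hμ : μm < μp) (hK : 1 < K) :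
    θfairPen μm μp K lam = sqrtBranch μm μp K (min lam ((K - 1) / (K + 1))) := by
  unfold θfairPen
  split_ifs with h
  · rw [min_eq_left h, sqrtBranch]
  · rw [min_eq_right (not_le.1 h).le, sqrtBranch_end hμ hK]

theorem penalized_fair_threshold_antitone (μm μp K : ℝ) (hμ : μm < μp)
    (hK1 : 1 < K) (hK2 : K < Real.exp ((μp - μm) ^ 2 / 2)) :
    AntitoneOn (fun lam => θfairPen μm μp K lam) (Ici (0 : ℝ)) ∧
    AntitoneOn (fun lam => avgDist μm μp K (θfairPen μm μp K lam)) (Ici (0 : ℝ)) := by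
  have h0 : 0 ≤ (K - 1) / (K + 1) := div_nonneg (by linarith) (by linarith)
  have hmem : ∀ lam ∈ Ici (0 : ℝ), min lam ((K - 1) / (K + 1)) ∈ Icc 0 ((K - 1) / (K + 1)) :=
    fun lam hl => ⟨le_min hl h0, min_le_right _ _⟩
  have hanti : AntitoneOn (fun lam => θfairPen μm μp K lam) (Ici (0 : ℝ)) := by
    intro a ha b hb hab
    simp only [θfairPen_eq_sqrtBranch_min hμ hK1]
    exact sqrtBranch_antitoneOn μm μp hK1 (hmem a ha) (hmem b hb) (min_le_min_right _ hab)
  have hge : ∀ lam ∈ Ici (0 : ℝ), θfairPen μm μp K lam ∈ Ici (μm + (μp - μm) / (K + 1)) := by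
    intro lam hl
    rw [mem_Ici, θfairPen_eq_sqrtBranch_min hμ hK1, ← sqrtBranch_end hμ hK1]
    exact sqrtBranch_antitoneOn μm μp hK1 (hmem lam hl) ⟨h0, le_rfl⟩ (min_le_right _ _)
  exact ⟨hanti, fun a ha b hb hab =>
    avgDist_monotoneOn μm μp (by linarith) (hge b hb) (hge a ha) (hanti ha hb hab)⟩
end
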